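/- arXiv:2108.04612 — 2 statements merged into one kernel-verified Lean document; each statement's English description precedes it below -/
import Mathlib

section
/- Let H be a Hilbert space and let σ : H → c₀, x ↦ (σ₁(x), σ₂(x), …), be a continuous map. Let (d_n)_{n≥1} be a strictly decreasing sequence of positive reals with d_n → 0, let (ε_n)_{n≥1} be a sequence of nonnegative reals with ε_n → 0, and let K_ε = {t = (t₁, t₂, …) ∈ c₀ : 0 ≤ t_n ≤ ε_n for all n} (a convex compact subset of c₀). If there exists a continuous map x : K_ε → H such that d_n + t_n − ε_n ≤ σ_n(x(t)) ≤ d_n + t_n for all t ∈ K_ε and all n ≥ 1, then there exists x ∈ H with σ_n(x) = d_n for all n ≥ 1. -/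
open Filter ZeroAtInfty

noncomputable section

lemma aux_interp {α : Type*} [MeasurableSpace α] (μ : MeasureTheory.Measure α) (P : α → ℝ → ℝ) (N : ℕ)
    (hP : ∀ x, ∃ q : Polynomial ℝ, q.natDegree ≤ N ∧ ∀ s, q.eval s = P x s)
    (hI : ∀ s, MeasureTheory.Integrable (fun x => P x s) μ)
    (s₀ : ℝ) (hs₀ : 0 < s₀) (c : ℝ) (hc : ∀ s, 0 < s → s < s₀ → ∫ x, P x s ∂μ = c) :
    ∫ x, P x 1 ∂μ = c := by
  let v : ℕ → ℝ := fun j => s₀ / (j + 2)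
  have hv : ∀ S : Set ℕ, Set.InjOn v S := by
    intro S i _ j _ h
    have h1 : (i : ℝ) + 2 ≠ 0 := by positivity
    have h2 : (j : ℝ) + 2 ≠ 0 := by positivity
    simp only [v] at h
    rw [div_eq_div_iff h1 h2] at h
    have := mul_left_cancel₀ hs₀.ne' h
    have : (i : ℝ) = j := by linarith
    exact_mod_cast this
  let S := Finset.range (N + 1)
  have key : ∀ x, P x 1 = ∑ j ∈ S, P x (v j) * (Lagrange.basis S v j).eval 1 := by
    intro x
    obtain ⟨q, hq, hq'⟩ := hP x
    have hdeg : q.degree < S.card := by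
      rw [Finset.card_range]
      exact lt_of_le_of_lt Polynomial.degree_le_natDegree (by exact_mod_cast Nat.lt_succ_of_le hq)
    have := Lagrange.eq_interpolate (hv S) hdeg
    have h2 := congrArg (Polynomial.eval 1) this
    rw [hq', Lagrange.interpolate_apply, Polynomial.eval_finsetSum] at h2
    simpa [hq'] using h2
  simp_rw [key]
  rw [MeasureTheory.integral_finsetSum _ (fun j _ => (hI (v j)).mul_const _)]
  have : ∀ j ∈ S, ∫ x, P x (v j) * (Lagrange.basis S v j).eval 1 ∂μ
      = c * (Lagrange.basis S v j).eval 1 := by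
    intro j _
    rw [MeasureTheory.integral_mul_const, hc]
    · simp only [v]; positivity
    · simp only [v]
      rw [div_lt_iff₀ (by positivity)]
      have : (0:ℝ) ≤ j := by positivity
      nlinarith
  rw [Finset.sum_congr rfl this, ← Finset.mul_sum, ← Polynomial.eval_finsetSum,
    Lagrange.sum_basis (hv S) ⟨0, by simp [S]⟩]
  simp

lemma aux_det {n : ℕ} (A : EuclideanSpace ℝ (Fin n) →L[ℝ] EuclideanSpace ℝ (Fin n)) :
    ∃ q : Polynomial ℝ, q.natDegree ≤ n ∧
      ∀ s : ℝ, q.eval s = (ContinuousLinearMap.id ℝ _ - s • A).det := by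
  let b := (EuclideanSpace.basisFun (Fin n) ℝ).toBasis
  let M := LinearMap.toMatrix b b A.toLinearMap
  refine ⟨Matrix.det ((Polynomial.X : Polynomial ℝ) • (-M).map Polynomial.C
    + (1 : Matrix (Fin n) (Fin n) ℝ).map Polynomial.C), ?_, ?_⟩
  · simpa using Polynomial.natDegree_det_X_add_C_le (-M) 1
  · intro s
    rw [ContinuousLinearMap.det, ← LinearMap.det_toMatrix b, ← Polynomial.coe_evalRingHom,
      RingHom.map_det]
    congr 1
    have : ((ContinuousLinearMap.id ℝ (EuclideanSpace ℝ (Fin n)) - s • A : _ →L[ℝ] _) : _ →ₗ[ℝ] _)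
      = LinearMap.id - s • A.toLinearMap := rfl
    rw [this, map_sub, map_smul, LinearMap.toMatrix_id]
    ext i j
    simp [Matrix.one_apply, M]
    split_ifs <;> simp <;> ring

lemma aux_normsq {E : Type*} [NormedAddCommGroup E] [InnerProductSpace ℝ E] (x y : E) (M : ℝ) (k : ℕ) :
    ∃ q : Polynomial ℝ, q.natDegree ≤ 2 * k ∧
      ∀ s : ℝ, q.eval s = (1 - ‖x - s • y‖ ^ 2 / M ^ 2) ^ k := by
  refine ⟨(Polynomial.C (- ‖y‖^2 / M^2) * Polynomial.X ^ 2
    + Polynomial.C (2 * inner ℝ x y / M ^ 2) * Polynomial.X + Polynomial.C (1 - ‖x‖^2/M^2)) ^ k, ?_, ?_⟩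
  · refine Polynomial.natDegree_pow_le.trans ?_
    rw [mul_comm]
    gcongr
    exact Polynomial.natDegree_quadratic_le
  · intro s
    rw [@norm_sub_sq_real, inner_smul_right, norm_smul]
    simp only [Polynomial.eval_pow, Polynomial.eval_add, Polynomial.eval_mul, Polynomial.eval_C,
      Polynomial.eval_X]
    congr 1
    rw [mul_pow, Real.norm_eq_abs, sq_abs]
    ring

lemma aux_bij {E : Type*} [NormedAddCommGroup E] [NormedSpace ℝ E] [CompleteSpace E] (p : E → E)
    (L : NNReal) (hL : LipschitzWith L p) (s : ℝ) (hs : 0 < s) (hsL : s * L < 1) :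
    Function.Bijective (fun x => x - s • p x) := by
  rcases subsingleton_or_nontrivial E with hE | hE
  · exact ⟨fun _ _ _ => Subsingleton.elim _ _, fun y => ⟨y, Subsingleton.elim _ _⟩⟩
  have hA : ApproximatesLinearOn (fun x => x - s • p x)
      ((ContinuousLinearEquiv.refl ℝ E : E ≃L[ℝ] E) : E →L[ℝ] E) Set.univ (s.toNNReal * L) := by
    intro x _ y _
    have : (x - s • p x) - (y - s • p y) - ((ContinuousLinearEquiv.refl ℝ E : E ≃L[ℝ] E) : E →L[ℝ] E) (x - y)
      = - (s • (p x - p y)) := by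
      simp [smul_sub]; abel
    simp only [this, norm_neg, norm_smul, NNReal.coe_mul, Real.coe_toNNReal _ hs.le,
      Real.norm_of_nonneg hs.le, mul_assoc]
    gcongr
    exact hL.norm_sub_le x y
  have hN : ‖((ContinuousLinearEquiv.refl ℝ E).symm : E →L[ℝ] E)‖₊ = 1 := by
    ext; simpa using ContinuousLinearMap.norm_id (𝕜 := ℝ) (E := E)
  have hc : Subsingleton E ∨ s.toNNReal * L <
      ‖((ContinuousLinearEquiv.refl ℝ E).symm : E →L[ℝ] E)‖₊⁻¹ := by
    right
    rw [hN, inv_one]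
    rw [← NNReal.coe_lt_coe]
    simpa [Real.coe_toNNReal _ hs.le] using hsL
  exact ⟨Set.injOn_univ.1 (hA.injOn hc), hA.surjective hc⟩

open MeasureTheory in
lemma aux_smooth {n : ℕ} (p : EuclideanSpace ℝ (Fin n) → EuclideanSpace ℝ (Fin n))
    (hp : ContDiff ℝ 1 p) (hcs : HasCompactSupport p) : ∃ x, p x = x := by
  by_contra! hno
  obtain ⟨L, hL⟩ := hp.lipschitzWith_of_hasCompactSupport hcs one_ne_zero
  have hpc := hp.continuous
  have hdf := hp.continuous_fderiv one_ne_zero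
  obtain ⟨R₀, hR₀⟩ := hcs.isBounded.subset_closedBall 0
  obtain ⟨R, hR1, hR⟩ : ∃ R : ℝ, 0 < R ∧ ∀ x, R < ‖x‖ → p x = 0 := by
    refine ⟨max R₀ 1, by positivity, fun x hx => ?_⟩
    by_contra h
    have := hR₀ (subset_tsupport p h)
    rw [mem_closedBall_zero_iff] at this
    exact absurd (this.trans (le_max_left _ _)) (not_le.2 hx)
  let B := Metric.closedBall (0 : EuclideanSpace ℝ (Fin n)) R
  have hBc : IsCompact B := isCompact_closedBall 0 R
  have hB0 : (0 : EuclideanSpace ℝ (Fin n)) ∈ B := by simp [B, hR1.le]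
  have hfc : Continuous (fun x => ‖x - p x‖) := by fun_prop
  obtain ⟨δ, hδ0, hδR, hδ⟩ : ∃ δ : ℝ, 0 < δ ∧ δ ≤ R ∧ ∀ x ∈ B, δ ≤ ‖x - p x‖ := by
    obtain ⟨x₀, _, hx₀⟩ := hBc.exists_isMinOn ⟨0, hB0⟩ hfc.continuousOn
    refine ⟨min ‖x₀ - p x₀‖ R, ?_, min_le_right _ _, fun x hx => (min_le_left _ _).trans (hx₀ hx)⟩
    exact lt_min (norm_pos_iff.2 (sub_ne_zero.2 (hno x₀).symm)) hR1
  obtain ⟨M, hM0, hMR, hM⟩ : ∃ M : ℝ, 0 < M ∧ R ≤ M ∧ ∀ x ∈ B, ‖x - p x‖ ≤ M := by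
    obtain ⟨x₀, _, hx₀⟩ := hBc.exists_isMaxOn ⟨0, hB0⟩ hfc.continuousOn
    exact ⟨max ‖x₀ - p x₀‖ R, by positivity, le_max_right _ _,
      fun x hx => (hx₀ hx).trans (le_max_left _ _)⟩
  let J : ℝ → EuclideanSpace ℝ (Fin n) → ℝ :=
    fun s x => (ContinuousLinearMap.id ℝ _ - s • fderiv ℝ p x).det
  have hJc : ∀ s, Continuous (J s) := fun s =>
    ContinuousLinearMap.continuous_det.comp (by fun_prop)
  -- positivity of the determinant for small s
  obtain ⟨s₀, hs₀, hs₀L, hJpos⟩ : ∃ s₀ : ℝ, 0 < s₀ ∧ s₀ * L ≤ 1 ∧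
      ∀ s, 0 < s → s < s₀ → ∀ x, 0 < J s x := by
    have hcd : ContinuousAt (fun A : EuclideanSpace ℝ (Fin n) →L[ℝ] EuclideanSpace ℝ (Fin n) => A.det)
      (ContinuousLinearMap.id ℝ _) := ContinuousLinearMap.continuous_det.continuousAt
    have hev := hcd.eventually (lt_mem_nhds (a := (0:ℝ)) (by
      simp [ContinuousLinearMap.det]))
    obtain ⟨η, hη, hball⟩ := Metric.eventually_nhds_iff.1 hev
    refine ⟨min η 1 / (L + 1), by positivity, ?_, ?_⟩
    · rw [div_mul_eq_mul_div, div_le_one (by positivity)]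
      have : min η 1 * (L:ℝ) ≤ 1 * L := by gcongr; exact min_le_right _ _
      linarith
    · intro s hs hs' x
      apply hball
      rw [dist_eq_norm, sub_sub_cancel_left, norm_neg, norm_smul, Real.norm_of_nonneg hs.le]
      have h1 : ‖fderiv ℝ p x‖ ≤ L := norm_fderiv_le_of_lipschitz ℝ hL
      rw [lt_div_iff₀ (by positivity)] at hs'
      calc s * ‖fderiv ℝ p x‖ ≤ s * L := by gcongr
        _ < s * (L + 1) := by nlinarith
        _ < _ := hs'.trans_le (min_le_left _ _)
  -- the key identity
  have key : ∀ k : ℕ, ∫ x in B, (1 - ‖x - p x‖ ^ 2 / M ^ 2) ^ k * J 1 x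
      = ∫ x in B, (1 - ‖x‖ ^ 2 / M ^ 2) ^ k := by
    intro k
    have := aux_interp (volume.restrict B)
      (fun x s => (1 - ‖x - s • p x‖ ^ 2 / M ^ 2) ^ k * J s x) (2 * k + n) ?_ ?_ s₀ hs₀
      (∫ x in B, (1 - ‖x‖ ^ 2 / M ^ 2) ^ k) ?_
    · simpa using this
    · intro x
      obtain ⟨q1, h1, h1'⟩ := aux_normsq x (p x) M k
      obtain ⟨q2, h2, h2'⟩ := aux_det (fderiv ℝ p x)
      refine ⟨q1 * q2, Polynomial.natDegree_mul_le.trans (by omega), fun s => ?_⟩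
      rw [Polynomial.eval_mul, h1', h2']
    · intro s
      have hJs := hJc s
      exact (Continuous.continuousOn (by fun_prop)).integrableOn_compact hBc
    · intro s hs hss
      have hbij := aux_bij p L hL s hs (by
        rcases eq_or_ne L 0 with h | h
        · simp [h]
        · have : (0:ℝ) < L := by positivity
          nlinarith)
      have himg : (fun x => x - s • p x) '' B = B := by
        have hout : ∀ x, x ∉ B → x - s • p x = x := by
          intro x hx
          rw [hR x (by simpa [B] using hx)]; simp
        apply Set.Subset.antisymm
        · rintro _ ⟨x, hx, rfl⟩
          by_contra hxn
          have h1 := hout _ hxn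
          have h2 := hbij.1 h1
          simp only at h2 hxn
          rw [h2] at hxn
          exact hxn hx
        · intro y hy
          obtain ⟨x, hx⟩ := hbij.2 y
          refine ⟨x, ?_, hx⟩
          by_contra hxn
          have h1 := hout _ hxn
          simp only at hx
          rw [h1] at hx
          exact hxn (hx ▸ hy)
      have hcv := integral_image_eq_integral_abs_det_fderiv_smul volume
        (s := B) (f := fun x => x - s • p x)
        (f' := fun x => ContinuousLinearMap.id ℝ _ - s • fderiv ℝ p x)
        hBc.measurableSet (fun x _ => by
          have h1 := (hp.differentiable one_ne_zero x).hasFDerivAt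
          exact ((hasFDerivAt_id x).sub (h1.const_smul s)).hasFDerivWithinAt)
        hbij.1.injOn (fun y => (1 - ‖y‖ ^ 2 / M ^ 2) ^ k)
      rw [himg] at hcv
      rw [hcv]
      refine integral_congr_ae (Eventually.of_forall fun x => ?_)
      have := hJpos s hs hss x
      simp only [J] at this ⊢
      rw [abs_of_pos this, smul_eq_mul, mul_comm]
  -- estimates
  let C := ∫ x in B, |J 1 x|
  let V := volume.real (Metric.closedBall (0 : EuclideanSpace ℝ (Fin n)) (δ / 2))
  have hV : 0 < V := by
    apply ENNReal.toReal_pos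
    · exact (Metric.measure_closedBall_pos volume _ (by positivity)).ne'
    · exact (isCompact_closedBall _ _).measure_lt_top.ne
  let q1 := 1 - δ ^ 2 / M ^ 2
  let q2 := 1 - (δ / 2) ^ 2 / M ^ 2
  have hq1 : 0 ≤ q1 := by
    simp only [q1]
    rw [sub_nonneg, div_le_one (by positivity)]
    have := hδR.trans hMR
    gcongr
  have hq12 : q1 < q2 := by
    simp only [q1, q2]
    gcongr
    linarith
  have hq2 : 0 < q2 := hq1.trans_lt hq12
  have hJ1 := hJc 1
  have upper : ∀ k : ℕ, ∫ x in B, (1 - ‖x - p x‖ ^ 2 / M ^ 2) ^ k * J 1 x ≤ q1 ^ k * C := by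
    intro k
    rw [← integral_const_mul]
    refine setIntegral_mono_on ?_ ?_ hBc.measurableSet ?_
    · exact (Continuous.continuousOn (by fun_prop)).integrableOn_compact hBc
    · exact (Continuous.continuousOn (by fun_prop)).integrableOn_compact hBc
    · intro x hx
      have h1 := hδ x hx
      have h2 := hM x hx
      have h3 : 0 ≤ 1 - ‖x - p x‖ ^ 2 / M ^ 2 := by
        rw [sub_nonneg, div_le_one (by positivity)]
        gcongr
      have h4 : 1 - ‖x - p x‖ ^ 2 / M ^ 2 ≤ q1 := by
        simp only [q1]; gcongr
      calc _ ≤ (1 - ‖x - p x‖ ^ 2 / M ^ 2) ^ k * |J 1 x| := by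
            gcongr; exact le_abs_self _
        _ ≤ _ := by gcongr
  have lower : ∀ k : ℕ, q2 ^ k * V ≤ ∫ x in B, (1 - ‖x‖ ^ 2 / M ^ 2) ^ k := by
    intro k
    have hsub : Metric.closedBall (0 : EuclideanSpace ℝ (Fin n)) (δ / 2) ⊆ B :=
      Metric.closedBall_subset_closedBall (by linarith)
    have hint : IntegrableOn (fun x : EuclideanSpace ℝ (Fin n) => (1 - ‖x‖ ^ 2 / M ^ 2) ^ k) B :=
      (Continuous.continuousOn (by fun_prop)).integrableOn_compact hBc
    calc q2 ^ k * V = ∫ x in Metric.closedBall (0 : EuclideanSpace ℝ (Fin n)) (δ / 2), q2 ^ k := by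
          rw [setIntegral_const, smul_eq_mul, mul_comm]
      _ ≤ ∫ x in Metric.closedBall (0 : EuclideanSpace ℝ (Fin n)) (δ / 2),
            (1 - ‖x‖ ^ 2 / M ^ 2) ^ k := by
          refine setIntegral_mono_on ?_ (hint.mono_set hsub) measurableSet_closedBall ?_
          · exact continuousOn_const.integrableOn_compact (isCompact_closedBall _ _)
          · intro x hx
            rw [mem_closedBall_zero_iff] at hx
            simp only [q2] at hq2 ⊢
            gcongr
      _ ≤ _ := by
          refine setIntegral_mono_set hint ?_ hsub.eventuallyLE
          refine (ae_restrict_iff' hBc.measurableSet).2 (Eventually.of_forall fun x hx => ?_)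
          have hx' : ‖x‖ ≤ R := by simpa [B] using hx
          apply pow_nonneg
          rw [sub_nonneg, div_le_one (by positivity)]
          have := hx'.trans hMR
          gcongr
  have hlim : Tendsto (fun k : ℕ => (q1 / q2) ^ k * C) atTop (nhds (0 * C)) :=
    (tendsto_pow_atTop_nhds_zero_of_lt_one (by positivity)
      ((div_lt_one hq2).2 hq12)).mul_const C
  have hle : V ≤ 0 * C := by
    refine ge_of_tendsto' hlim fun k => ?_
    have := (lower k).trans ((key k).symm.le.trans (upper k))
    rw [div_pow, div_mul_eq_mul_div, le_div_iff₀ (by positivity)]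
    linarith
  linarith

lemma aux_approx {n : ℕ} (g : EuclideanSpace ℝ (Fin n) → EuclideanSpace ℝ (Fin n))
    (hg : Continuous g) (D : ℝ) (hD : ∀ x, ‖g x‖ ≤ D) (δ : ℝ) (hδ : 0 < δ) :
    ∃ x, ‖x - g x‖ < δ := by
  let χ : EuclideanSpace ℝ (Fin n) → ℝ := fun x => max 0 (min 1 (D + 2 - ‖x‖))
  have hχ : Continuous χ := by fun_prop
  have hD0 : 0 ≤ D := (norm_nonneg _).trans (hD 0)
  obtain ⟨p, hp, hpa, hps⟩ := (hχ.smul hg).exists_contDiff_approx 1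
    (ε := fun _ => min δ 1) continuous_const (fun _ => by positivity)
  have hcs : HasCompactSupport p := by
    refine HasCompactSupport.intro (isCompact_closedBall 0 (D + 2)) (fun x hx => ?_)
    have hx' : D + 2 < ‖x‖ := by simpa using hx
    by_contra h
    have h2 : χ x • g x ≠ 0 := hps h
    apply h2
    have : χ x = 0 := max_eq_left ((min_le_right _ _).trans (by linarith))
    rw [this, zero_smul]
  obtain ⟨x, hx⟩ := aux_smooth p hp hcs
  have h1 : ‖x - χ x • g x‖ < min δ 1 := by
    have := hpa x
    rwa [hx, dist_eq_norm] at this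
  have hχ0 : 0 ≤ χ x := le_max_left _ _
  have hχ1 : χ x ≤ 1 := max_le zero_le_one (min_le_left _ _)
  have h2 : ‖χ x • g x‖ ≤ D := by
    rw [norm_smul, Real.norm_of_nonneg hχ0]
    have := hD x
    have := norm_nonneg (g x)
    nlinarith
  have h3 : ‖x‖ ≤ D + 1 := by
    have h4 := norm_sub_norm_le x (χ x • g x)
    have := min_le_right δ 1
    linarith
  have h5 : χ x = 1 := by
    simp only [χ]
    rw [min_eq_left (by linarith), max_eq_right zero_le_one]
  refine ⟨x, ?_⟩
  rw [h5, one_smul] at h1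
  exact h1.trans_le (min_le_left _ _)

lemma aux_single (i : ℕ) : ∃ e : C₀(ℕ, ℝ), ∀ n, e n = if n = i then 1 else 0 := by
  refine ⟨⟨⟨fun n => if n = i then 1 else 0, continuous_of_discreteTopology⟩, ?_⟩, fun n => rfl⟩
  rw [cocompact_eq_cofinite, Nat.cofinite_eq_atTop]
  refine tendsto_const_nhds.congr' ?_
  filter_upwards [eventually_gt_atTop i] with n hn
  simp [hn.ne']

lemma aux_c0 (t : ℕ → ℝ) (ε : ℕ → ℝ) (hεlim : Tendsto ε atTop (nhds 0))
    (h : ∀ n, 0 ≤ t n ∧ t n ≤ ε n) : ∃ e : C₀(ℕ, ℝ), ∀ n, e n = t n := by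
  refine ⟨⟨⟨t, continuous_of_discreteTopology⟩, ?_⟩, fun n => rfl⟩
  rw [cocompact_eq_cofinite, Nat.cofinite_eq_atTop]
  exact squeeze_zero (fun n => (h n).1) (fun n => (h n).2) hεlim

lemma aux_finite (F : C₀(ℕ, ℝ) → C₀(ℕ, ℝ)) (d ε : ℕ → ℝ) (hε : ∀ n, 0 ≤ ε n)
    (K : Set C₀(ℕ, ℝ)) (hK : K = {t : C₀(ℕ, ℝ) | ∀ n, 0 ≤ t n ∧ t n ≤ ε n})
    (hF : ContinuousOn F K)
    (hx : ∀ t ∈ K, ∀ n : ℕ, d n + t n - ε n ≤ F t n ∧ F t n ≤ d n + t n)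
    (N : ℕ) (δ : ℝ) (hδ : 0 < δ) : ∃ t ∈ K, ∀ n < N, |F t n - d n| ≤ δ := by
  choose e he using aux_single
  let cl : ℕ → ℝ → ℝ := fun i r => max 0 (min (ε i) r)
  let c : EuclideanSpace ℝ (Fin N) → C₀(ℕ, ℝ) := fun v => ∑ i : Fin N, cl i (v i) • e i
  have hcc : Continuous c := by
    apply continuous_finsetSum
    intro i _
    have : Continuous fun v : EuclideanSpace ℝ (Fin N) => cl i (v i) := by
      simp only [cl]; fun_prop
    exact this.smul continuous_const
  have hsum : ∀ (s : Finset (Fin N)) (f : Fin N → C₀(ℕ, ℝ)) (n : ℕ),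
      (∑ i ∈ s, f i) n = ∑ i ∈ s, f i n := by
    intro s f n
    induction s using Finset.induction_on with
    | empty => simp
    | insert a s ha ih => rw [Finset.sum_insert ha, Finset.sum_insert ha, ← ih]; rfl
  have hcv : ∀ v n, c v n = if h : n < N then cl n (v ⟨n, h⟩) else 0 := by
    intro v n
    simp only [c]
    rw [hsum]
    simp only [ZeroAtInftyContinuousMap.smul_apply, he, smul_eq_mul, mul_ite, mul_one, mul_zero]
    split_ifs with h
    · rw [Finset.sum_eq_single (⟨n, h⟩ : Fin N)]
      · simp
      · intro b _ hb
        rw [if_neg]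
        intro h2
        exact hb (Fin.ext h2.symm)
      · simp
    · refine Finset.sum_eq_zero fun i _ => if_neg ?_
      intro h2
      exact h (h2 ▸ i.2)
  have hcK : ∀ v, c v ∈ K := by
    intro v
    rw [hK]
    intro n
    rw [hcv]
    split_ifs with h
    · exact ⟨le_max_left _ _, max_le (hε n) (min_le_left _ _)⟩
    · exact ⟨le_rfl, hε n⟩
  have hev : ∀ n, Continuous (fun f : C₀(ℕ, ℝ) => f n) := by
    intro n
    have h1 : Continuous (fun f : BoundedContinuousFunction ℕ ℝ => f n) :=
      continuous_eval_const n
    exact h1.comp ZeroAtInftyContinuousMap.isometry_toBCF.continuous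
  have hFc : Continuous (fun v => F (c v)) := hF.comp_continuous hcc hcK
  let g : EuclideanSpace ℝ (Fin N) → EuclideanSpace ℝ (Fin N) :=
    fun v => WithLp.toLp 2 fun i : Fin N => d i + c v i - F (c v) i
  have hgi : ∀ v (i : Fin N), g v i = d i + c v i - F (c v) i := fun v i => rfl
  have hg : Continuous g := by
    refine (PiLp.continuous_toLp 2 _).comp (continuous_pi fun i => ?_)
    exact (continuous_const.add ((hev i).comp hcc)).sub ((hev i).comp hFc)
  have hgb : ∀ v (i : Fin N), 0 ≤ g v i ∧ g v i ≤ ε i := by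
    intro v i
    have := hx (c v) (hcK v) i
    rw [hgi]
    constructor <;> linarith
  obtain ⟨v, hv⟩ := aux_approx g hg (Real.sqrt (∑ i : Fin N, ε i ^ 2)) (by
    intro v
    rw [EuclideanSpace.norm_eq]
    apply Real.sqrt_le_sqrt
    apply Finset.sum_le_sum
    intro i _
    rw [Real.norm_of_nonneg (hgb v i).1]
    exact pow_le_pow_left₀ (hgb v i).1 (hgb v i).2 2) δ hδ
  refine ⟨c v, hcK v, fun n hn => ?_⟩
  have h1 : |v ⟨n, hn⟩ - g v ⟨n, hn⟩| ≤ δ := by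
    have := (PiLp.norm_apply_le (v - g v) ⟨n, hn⟩).trans hv.le
    simpa using this
  have h2 := hgb v ⟨n, hn⟩
  have h3 := hgi v ⟨n, hn⟩
  have h4 := hcv v n
  rw [dif_pos hn] at h4
  simp only at h2 h3
  have h5 : F (c v) n - d n = cl n (v ⟨n, hn⟩) - g v ⟨n, hn⟩ := by
    rw [h3, ← h4]; ring
  rw [h5]
  rw [abs_le] at h1 ⊢
  simp only [cl]
  constructor
  · rcases min_cases (ε n) (v ⟨n, hn⟩) with h | h <;>
    rcases max_cases 0 (min (ε n) (v ⟨n, hn⟩)) with h' | h' <;> linarith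
  · rcases min_cases (ε n) (v ⟨n, hn⟩) with h | h <;>
    rcases max_cases 0 (min (ε n) (v ⟨n, hn⟩)) with h' | h' <;> linarith

theorem stmt14 {H : Type*} [NormedAddCommGroup H] [InnerProductSpace ℝ H] [CompleteSpace H]
    (σ : H → C₀(ℕ, ℝ)) (hσ : Continuous σ)
    (d : ℕ → ℝ) (hd : StrictAnti d) (hdpos : ∀ n, 0 < d n)
    (hdlim : Filter.Tendsto d Filter.atTop (nhds 0))
    (ε : ℕ → ℝ) (hε : ∀ n, 0 ≤ ε n) (hεlim : Filter.Tendsto ε Filter.atTop (nhds 0))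
    (K : Set C₀(ℕ, ℝ)) (hK : K = {t : C₀(ℕ, ℝ) | ∀ n, 0 ≤ t n ∧ t n ≤ ε n})
    (hx : ∃ x : C₀(ℕ, ℝ) → H, ContinuousOn x K ∧
      ∀ t ∈ K, ∀ n : ℕ, d n + t n - ε n ≤ σ (x t) n ∧ σ (x t) n ≤ d n + t n) :
    ∃ y : H, ∀ n : ℕ, σ y n = d n := by
  obtain ⟨x, hxc, hxb⟩ := hx
  have hF : ContinuousOn (fun t => σ (x t)) K := hσ.comp_continuousOn hxc
  have hfin := fun k : ℕ => aux_finite (fun t => σ (x t)) d ε hε K hK hF hxb k (1 / ((k : ℝ) + 1))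
    (by positivity)
  choose t htK ht using hfin
  have htK' : ∀ k n, 0 ≤ t k n ∧ t k n ≤ ε n := by
    intro k
    have := htK k
    rw [hK] at this
    exact this
  have hcomp : IsCompact (Set.univ.pi fun n : ℕ => Set.Icc 0 (ε n)) :=
    isCompact_univ_pi fun n => isCompact_Icc
  obtain ⟨a, ha, φ, hφ, hlim⟩ := hcomp.tendsto_subseq (x := fun k => (t k : ℕ → ℝ))
    (fun k n _ => htK' k n)
  obtain ⟨b, hb⟩ := aux_c0 a ε hεlim (fun n => ha n trivial)
  have hbK' : ∀ n, 0 ≤ b n ∧ b n ≤ ε n := by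
    intro n; rw [hb]; exact ha n trivial
  have hbK : b ∈ K := by rw [hK]; exact hbK'
  have hpt : ∀ n, Tendsto (fun k => t (φ k) n) atTop (nhds (b n)) := by
    intro n
    rw [hb]
    exact (tendsto_pi_nhds.1 hlim) n
  have hconv : Tendsto (fun k => t (φ k)) atTop (nhds b) := by
    rw [ZeroAtInftyContinuousMap.tendsto_iff_tendstoUniformly, Metric.tendstoUniformly_iff]
    intro η hη
    obtain ⟨N, hN⟩ := eventually_atTop.1 (hεlim.eventually (gt_mem_nhds hη))
    have h1 : ∀ᶠ k in atTop, ∀ n ∈ Finset.range N, dist (t (φ k) n) (b n) < η := by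
      rw [Filter.eventually_all_finset]
      intro n _
      exact Metric.tendsto_nhds.1 (hpt n) η hη
    filter_upwards [h1] with k hk n
    rcases lt_or_ge n N with h | h
    · rw [dist_comm]; exact hk n (Finset.mem_range.2 h)
    · have h2 := hN n h
      have h3 := htK' (φ k) n
      have h4 := hbK' n
      rw [Real.dist_eq, abs_lt]
      constructor <;> linarith
  have hconvF : Tendsto (fun k => σ (x (t (φ k)))) atTop (nhds (σ (x b))) :=
    (hF b hbK).tendsto.comp (tendsto_nhdsWithin_iff.2 ⟨hconv, Eventually.of_forall fun k => htK _⟩)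
  refine ⟨x b, fun n => ?_⟩
  have h1 : Tendsto (fun k => σ (x (t (φ k))) n) atTop (nhds (σ (x b) n)) :=
    (ZeroAtInftyContinuousMap.tendsto_iff_tendstoUniformly.1 hconvF).tendsto_at n
  have h2 : Tendsto (fun k => σ (x (t (φ k))) n - d n) atTop (nhds 0) := by
    have hz := (tendsto_one_div_add_atTop_nhds_zero_nat (𝕜 := ℝ)).comp hφ.tendsto_atTop
    refine squeeze_zero_norm' ?_ hz
    filter_upwards [eventually_gt_atTop n] with k hk
    exact ht (φ k) n (hk.trans_le (hφ.id_le k))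
  have h3 := tendsto_nhds_unique h2 (h1.sub_const (d n))
  linarith
end
end

section
/- For every ε > 0 and every positive integer N there exists a basis g₁, …, g_N of ℝ^N consisting of unit vectors such that for every n ∈ {1, …, N}: (i) span{g₁, …, g_n} = span{e₁, …, e_n}, the span of the first n standard basis vectors; and (ii) for every choice of indices 1 ≤ i₁ < i₂ < ⋯ < i_n ≤ N, the Hausdorff distance between span{g_{i₁}, …, g_{i_n}} ∩ B and span{e₁, …, e_n} ∩ B is less than ε, where B is the closed unit ball of ℝ^N. -/
open Metric

noncomputable section

namespace S15

abbrev V (N : ℕ) := EuclideanSpace ℝ (Fin N)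

def sg {N : ℕ} (i : Fin N) : V N := EuclideanSpace.single i (1 : ℝ)

def v {N : ℕ} (δ : ℝ) (i : Fin N) : V N :=
  WithLp.toLp 2 (fun j : Fin N => ((Nat.descFactorial (i : ℕ) (j : ℕ) : ℕ) : ℝ) * δ ^ (j : ℕ))

def A {N n : ℕ} (ι : Fin n → Fin N) : Matrix (Fin n) (Fin n) ℝ :=
  Matrix.of fun a j => ((Nat.descFactorial (ι a : ℕ) (j : ℕ) : ℕ) : ℝ)

lemma det_A {N n : ℕ} (ι : Fin n → Fin N) (h : Function.Injective ι) : (A ι).det ≠ 0 := by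
  have h1 := Matrix.det_eval_matrixOfPolynomials_eq_det_vandermonde
    (fun a : Fin n => ((ι a : ℕ) : ℝ)) (fun j : Fin n => descPochhammer ℝ (j : ℕ))
    (fun j => descPochhammer_natDegree _ _) (fun j => monic_descPochhammer _ _)
  have h2 : A ι = Matrix.of fun a j : Fin n =>
      (descPochhammer ℝ (j : ℕ)).eval ((ι a : ℕ) : ℝ) := by
    ext a j
    simp [A, descPochhammer_eval_eq_descFactorial]
  rw [h2, ← h1, Matrix.det_vandermonde_ne_zero_iff]
  intro a b hab
  exact h (Fin.ext (by simpa using hab))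

def w {N n : ℕ} (δ : ℝ) (ι : Fin n → Fin N) (m : Fin n) : V N :=
  WithLp.toLp 2 (fun j : Fin N => if (j : ℕ) < n then (if (j : ℕ) = m then (1 : ℝ) else 0) else
    δ ^ ((j : ℕ) - (m : ℕ)) *
      ∑ a, (A ι)⁻¹ m a * ((Nat.descFactorial (ι a : ℕ) (j : ℕ) : ℕ) : ℝ))

lemma w_eq {N n : ℕ} (δ : ℝ) (hδ : δ ≠ 0) (ι : Fin n → Fin N) (h : Function.Injective ι)
    (m : Fin n) : δ ^ (m : ℕ) • w δ ι m = ∑ a, (A ι)⁻¹ m a • v δ (ι a) := by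
  have hd : IsUnit (A ι).det := (det_A ι h).isUnit
  ext j
  have hs : (∑ a, (A ι)⁻¹ m a • v δ (ι a)) j
      = (∑ a, (A ι)⁻¹ m a * ((Nat.descFactorial (ι a : ℕ) (j : ℕ) : ℕ) : ℝ)) * δ ^ (j : ℕ) := by
    simp [v, Finset.sum_mul, mul_assoc]
  rw [hs]
  by_cases hj : (j : ℕ) < n
  · have h3 : ((A ι)⁻¹ * A ι) m ⟨j, hj⟩ = if m = ⟨j, hj⟩ then 1 else 0 := by
      rw [Matrix.nonsing_inv_mul _ hd, Matrix.one_apply]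
    rw [Matrix.mul_apply] at h3
    simp only [A, Matrix.of_apply] at h3
    simp only [A]
    rw [h3]
    by_cases hm : (j : ℕ) = m
    · have : m = ⟨j, hj⟩ := Fin.ext hm.symm
      rw [if_pos this]
      simp [w, hm]
    · have : m ≠ ⟨j, hj⟩ := fun e => hm (by rw [e])
      simp [w, hj, hm, this]
  · have : (j : ℕ) = m + (j - m) := by have := m.2; omega
    simp only [w, PiLp.smul_apply, hj, if_false, smul_eq_mul]
    conv_rhs => rw [this, pow_add, ← this]
    ring

lemma v_eq {N n : ℕ} (δ : ℝ) (hδ : δ ≠ 0) (ι : Fin n → Fin N) (h : Function.Injective ι)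
    (a : Fin n) : v δ (ι a) = ∑ m, A ι a m • (δ ^ (m : ℕ) • w δ ι m) := by
  have hd : IsUnit (A ι).det := (det_A ι h).isUnit
  simp_rw [w_eq δ hδ ι h, Finset.smul_sum, smul_smul]
  rw [Finset.sum_comm]
  simp_rw [← Finset.sum_smul, ← Matrix.mul_apply, Matrix.mul_nonsing_inv _ hd, Matrix.one_apply]
  simp

lemma span_eq {N n : ℕ} (δ : ℝ) (hδ : δ ≠ 0) (ι : Fin n → Fin N) (h : Function.Injective ι) :
    Submodule.span ℝ (Set.range (v δ ∘ ι)) = Submodule.span ℝ (Set.range (w δ ι)) := by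
  apply le_antisymm
  · rw [Submodule.span_le]
    rintro _ ⟨a, rfl⟩
    simp only [Function.comp, SetLike.mem_coe]
    rw [v_eq δ hδ ι h]
    exact Submodule.sum_mem _ fun m _ => Submodule.smul_mem _ _ <| Submodule.smul_mem _ _ <|
      Submodule.subset_span ⟨m, rfl⟩
  · rw [Submodule.span_le]
    rintro _ ⟨m, rfl⟩
    have h1 := w_eq δ hδ ι h m
    have h2 : w δ ι m = (δ ^ (m : ℕ))⁻¹ • ∑ a, (A ι)⁻¹ m a • v δ (ι a) := by
      rw [← h1, smul_smul, inv_mul_cancel₀ (pow_ne_zero _ hδ), one_smul]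
    rw [h2]
    exact Submodule.smul_mem _ _ <| Submodule.sum_mem _ fun a _ => Submodule.smul_mem _ _ <|
      Submodule.subset_span ⟨a, rfl⟩

lemma v_ne {N : ℕ} (δ : ℝ) (i : Fin N) : v δ i ≠ 0 := by
  intro h
  have h1 : v δ i ⟨0, i.pos⟩ = 0 := by rw [h]; rfl
  simp [v] at h1

def g {N : ℕ} (δ : ℝ) (i : Fin N) : V N := ‖v δ i‖⁻¹ • v δ i

lemma span_g {N : ℕ} (δ : ℝ) (s : Set (Fin N)) :
    Submodule.span ℝ (g δ '' s) = Submodule.span ℝ (v δ '' s) := by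
  apply le_antisymm
  · rw [Submodule.span_le]
    rintro _ ⟨a, ha, rfl⟩
    exact Submodule.smul_mem _ _ (Submodule.subset_span ⟨a, ha, rfl⟩)
  · rw [Submodule.span_le]
    rintro _ ⟨a, ha, rfl⟩
    have : v δ a = ‖v δ a‖ • g δ a := by
      rw [g, smul_smul, mul_inv_cancel₀ (norm_ne_zero_iff.2 (v_ne δ a)), one_smul]
    rw [this]
    exact Submodule.smul_mem _ _ (Submodule.subset_span ⟨a, ha, rfl⟩)

lemma image_castLE {N n : ℕ} (hn : n ≤ N) {α : Type*} (f : Fin N → α) :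
    f '' {i : Fin N | (i : ℕ) < n} = Set.range (f ∘ Fin.castLE hn) := by
  rw [Set.range_comp]
  congr 1
  ext i
  simp only [Set.mem_ofPred_eq, Set.mem_range]
  exact ⟨fun h => ⟨⟨i, h⟩, rfl⟩, by rintro ⟨a, rfl⟩; exact a.2⟩

lemma w_castLE {N n : ℕ} (hn : n ≤ N) (δ : ℝ) (m : Fin n) :
    w δ (Fin.castLE hn) m = sg (Fin.castLE hn m) := by
  ext j
  by_cases hj : (j : ℕ) < n
  · simp [w, sg, hj, Pi.single_apply, Fin.ext_iff]
  · have h0 : ∀ a : Fin n, Nat.descFactorial (a : ℕ) (j : ℕ) = 0 := fun a =>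
      Nat.descFactorial_eq_zero_iff_lt.2 (by have := a.2; omega)
    have h1 : (j : ℕ) ≠ m := by have := m.2; omega
    simp [w, sg, hj, Pi.single_apply, Fin.ext_iff, h0, h1]

lemma span_first {N n : ℕ} (hn : n ≤ N) (δ : ℝ) (hδ : δ ≠ 0) :
    Submodule.span ℝ (g δ '' {i : Fin N | (i : ℕ) < n}) =
      Submodule.span ℝ (sg '' {i : Fin N | (i : ℕ) < n}) := by
  rw [span_g, image_castLE hn, image_castLE hn, span_eq δ hδ _ (Fin.castLE_injective hn)]
  congr 2
  funext m
  exact w_castLE hn δ m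

lemma half {N n : ℕ} (W E : Fin n → V N) (k : Fin n → Fin N)
    (hW : ∀ m m', W m (k m') = if m = m' then 1 else 0) (η : ℝ) (hη : 0 ≤ η)
    (hd : ∑ m, ‖W m - E m‖ ≤ η) (x : V N) (hx : x ∈ Submodule.span ℝ (Set.range W))
    (hx1 : ‖x‖ ≤ 1) :
    ∃ y ∈ (Submodule.span ℝ (Set.range E) : Set (V N)) ∩ Metric.closedBall 0 1,
      dist x y ≤ 2 * η := by
  obtain ⟨c, rfl⟩ := (Submodule.mem_span_range_iff_exists_fun ℝ).1 hx
  have hc : ∀ m, |c m| ≤ 1 := by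
    intro m
    have h1 : (∑ i, c i • W i) (k m) = c m := by simp [hW]
    have h2 := PiLp.norm_apply_le (∑ i, c i • W i) (k m)
    rw [h1, Real.norm_eq_abs] at h2
    exact h2.trans hx1
  set x := ∑ i, c i • W i
  set z := ∑ i, c i • E i with hz
  have hxz : ‖x - z‖ ≤ η := by
    have : x - z = ∑ i, c i • (W i - E i) := by
      simp [x, z, smul_sub, Finset.sum_sub_distrib]
    rw [this]
    refine (norm_sum_le _ _).trans (le_trans (Finset.sum_le_sum fun i _ => ?_) hd)
    rw [norm_smul, Real.norm_eq_abs]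
    exact mul_le_of_le_one_left (norm_nonneg _) (hc i)
  have hzn : ‖z‖ ≤ 1 + η := by
    have : z = x - (x - z) := by abel
    rw [this]
    exact (norm_sub_le _ _).trans (by linarith)
  have hp : 0 < 1 + η := by linarith
  have hi : (1 + η)⁻¹ * (1 + η) = 1 := inv_mul_cancel₀ hp.ne'
  have hip : 0 < (1 + η)⁻¹ := inv_pos.2 hp
  refine ⟨(1 + η)⁻¹ • z, ⟨?_, ?_⟩, ?_⟩
  · exact Submodule.smul_mem _ _ <| Submodule.sum_mem _ fun a _ => Submodule.smul_mem _ _ <|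
      Submodule.subset_span ⟨a, rfl⟩
  · rw [mem_closedBall_zero_iff, norm_smul, Real.norm_of_nonneg hip.le]
    calc _ ≤ (1 + η)⁻¹ * (1 + η) := by gcongr
      _ = 1 := hi
  · have h1 : x - (1 + η)⁻¹ • z = (x - z) + ((1 + η)⁻¹ * η) • z := by
      have : (1 + η)⁻¹ * η = 1 - (1 + η)⁻¹ := by linarith
      rw [this, sub_smul, one_smul]; abel
    rw [dist_eq_norm, h1]
    refine (norm_add_le _ _).trans ?_
    rw [norm_smul, Real.norm_of_nonneg (by positivity)]
    have : (1 + η)⁻¹ * η * ‖z‖ ≤ (1 + η)⁻¹ * η * (1 + η) := by gcongr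
    have h3 : (1 + η)⁻¹ * η * (1 + η) = η := by
      rw [mul_right_comm, hi, one_mul]
    linarith

lemma haus {N n : ℕ} (W E : Fin n → V N) (k : Fin n → Fin N)
    (hW : ∀ m m', W m (k m') = if m = m' then 1 else 0)
    (hE : ∀ m m', E m (k m') = if m = m' then 1 else 0) (η : ℝ) (hη : 0 ≤ η)
    (hd : ∑ m, ‖W m - E m‖ ≤ η) :
    Metric.hausdorffDist ((Submodule.span ℝ (Set.range W) : Set (V N)) ∩ Metric.closedBall 0 1)
      ((Submodule.span ℝ (Set.range E) : Set (V N)) ∩ Metric.closedBall 0 1) ≤ 2 * η := by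
  apply Metric.hausdorffDist_le_of_mem_dist (by positivity)
  · rintro x ⟨hx, hx1⟩
    exact half W E k hW η hη hd x hx (mem_closedBall_zero_iff.1 hx1)
  · rintro x ⟨hx, hx1⟩
    simp_rw [norm_sub_rev (W _)] at hd
    exact half E W k hE η hη hd x hx (mem_closedBall_zero_iff.1 hx1)

lemma ev {N n : ℕ} (hn : n ≤ N) (ι : Fin n → Fin N) (η : ℝ) (hη : 0 < η) :
    ∀ᶠ δ : ℝ in nhds 0, ∑ m, ‖w δ ι m - sg (Fin.castLE hn m)‖ < η := by
  have hc : Continuous fun δ : ℝ => ∑ m, ‖w δ ι m - sg (Fin.castLE hn m)‖ := by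
    refine continuous_finsetSum _ fun m _ => Continuous.norm (Continuous.sub ?_ continuous_const)
    unfold w
    refine (PiLp.continuous_toLp 2 _).comp (continuous_pi fun j => ?_)
    split_ifs <;> fun_prop
  have h0 : ∑ m, ‖w 0 ι m - sg (Fin.castLE hn m)‖ = 0 := by
    refine Finset.sum_eq_zero fun m _ => ?_
    rw [norm_eq_zero, sub_eq_zero]
    ext j
    by_cases hj : (j : ℕ) < n
    · simp [w, sg, hj, Pi.single_apply, Fin.ext_iff]
    · have h1 : (j : ℕ) ≠ m := by have := m.2; omega
      have h2 : (j : ℕ) - m ≠ 0 := by have := m.2; omega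
      simp [w, sg, hj, Pi.single_apply, Fin.ext_iff, h1, h2]
  have := hc.tendsto 0
  simp only [h0] at this
  exact this.eventually_lt_const hη

end S15

open S15 in
theorem stmt15 (ε : ℝ) (hε : 0 < ε) (N : ℕ) (hN : 1 ≤ N) :
    ∃ g : Fin N → EuclideanSpace ℝ (Fin N),
      (∀ i, ‖g i‖ = 1) ∧ LinearIndependent ℝ g ∧
      Submodule.span ℝ (Set.range g) = ⊤ ∧
      ∀ n : ℕ, 1 ≤ n → n ≤ N →
        (Submodule.span ℝ (g '' {i : Fin N | (i : ℕ) < n}) =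
          Submodule.span ℝ ((fun i : Fin N => EuclideanSpace.single i (1 : ℝ)) ''
            {i : Fin N | (i : ℕ) < n})) ∧
        ∀ ι : Fin n → Fin N, StrictMono ι →
          Metric.hausdorffDist
            ((Submodule.span ℝ (Set.range (g ∘ ι)) : Set (EuclideanSpace ℝ (Fin N))) ∩
              Metric.closedBall 0 1)
            ((Submodule.span ℝ ((fun i : Fin N => EuclideanSpace.single i (1 : ℝ)) ''
                {i : Fin N | (i : ℕ) < n}) : Set (EuclideanSpace ℝ (Fin N))) ∩
              Metric.closedBall 0 1) < ε := by
  have hev : ∀ᶠ δ : ℝ in nhds 0, ∀ n : Fin (N + 1), ∀ ι : Fin (n : ℕ) → Fin N,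
      ∑ m, ‖w δ ι m - sg (Fin.castLE (Nat.lt_succ_iff.1 n.2) m)‖ < ε / 3 := by
    rw [Filter.eventually_all]
    intro n
    rw [Filter.eventually_all]
    intro ι
    exact ev _ ι _ (by positivity)
  obtain ⟨δ, hδ, hδ0⟩ := ((hev.filter_mono nhdsWithin_le_nhds).and
    (self_mem_nhdsWithin : Set.Ioi (0 : ℝ) ∈ nhdsWithin 0 (Set.Ioi 0))).exists
  have hδ1 : δ ≠ 0 := ne_of_gt hδ0
  have htop : Submodule.span ℝ (Set.range (S15.g (N := N) δ)) = ⊤ := by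
    have h1 := span_first (le_refl N) δ hδ1
    have h2 : {i : Fin N | (i : ℕ) < N} = Set.univ := by ext i; simp
    rw [h2, Set.image_univ, Set.image_univ] at h1
    rw [h1]
    have := (EuclideanSpace.basisFun (Fin N) ℝ).toBasis.span_eq
    rw [← this]
    congr 2
    funext i
    simp [sg]
  refine ⟨S15.g δ, ?_, ?_, htop, ?_⟩
  · intro i
    have := norm_ne_zero_iff.2 (v_ne δ i)
    rw [S15.g, norm_smul, norm_inv, norm_norm, inv_mul_cancel₀ this]
  · exact linearIndependent_of_top_le_span_of_card_eq_finrank htop.ge (by simp)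
  · intro n _ hn
    refine ⟨span_first hn δ hδ1, ?_⟩
    intro ι hι
    have h1 := hδ ⟨n, by omega⟩ ι
    have h2 : Submodule.span ℝ (Set.range (S15.g δ ∘ ι)) = Submodule.span ℝ (Set.range (w δ ι)) := by
      rw [Set.range_comp, span_g, ← Set.range_comp, span_eq δ hδ1 ι hι.injective]
    have h3 := haus (w δ ι) (sg ∘ Fin.castLE hn) (Fin.castLE hn)
      (by intro m m'; simp [w, Fin.ext_iff, eq_comm])
      (by intro m m'; simp [sg, Pi.single_apply, Fin.ext_iff, eq_comm]) (ε / 3)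
      (by positivity) h1.le
    rw [h2, image_castLE hn]
    refine lt_of_le_of_lt h3 ?_
    linarith
end
end
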